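/- arXiv:2007.05456 — 5 statements merged into one kernel-verified Lean document; each statement's English description precedes it below -/
import Mathlib

section
/- Freedman's inequality: Let (X_n)_{n≥1} be a martingale difference sequence with respect to a filtration (F_n)_{n≥0} on a probability space (i.e., each X_n is F_n-measurable and E[X_n | F_{n-1}] = 0 almost surely), and suppose |X_n| ≤ a almost surely for all n, for some constant a > 0. Then for every δ ∈ (0,1), with probability at least 1 − δ it holds simultaneously for all n ≥ 1 that |∑_{i=1}^n X_i| ≤ 2·sqrt( (∑_{i=1}^n Var[X_i | F_{i-1}]) · ln(4n/δ) ) + 4a·ln(4n/δ), where Var[X_i | F_{i-1}] = E[X_i² | F_{i-1}] denotes the conditional variance. -/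
open MeasureTheory Finset

lemma exp_le_quad {x : ℝ} (hx : |x| ≤ 1) : Real.exp x ≤ 1 + x + 3 / 4 * x ^ 2 := by
  have h := Real.exp_bound hx (n := 3) (by norm_num)
  simp [Finset.sum_range_succ, Nat.factorial] at h
  have h2 := (abs_le.mp h).2
  have h3 : |x| ^ 3 ≤ x ^ 2 := by
    rw [← sq_abs x]
    nlinarith [sq_nonneg |x|, abs_nonneg x]
  nlinarith [h2, h3, sq_nonneg x]

lemma ville {Ω : Type*} {m : MeasurableSpace Ω} (μ : Measure Ω) [IsProbabilityMeasure μ]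
    (ℱ : Filtration ℕ m) (M : ℕ → Ω → ℝ) (hM : Supermartingale M ℱ μ)
    (hpos : ∀ n ω, 0 ≤ M n ω) (C : ℝ) (hC : 0 < C) :
    μ {ω | ∃ n, C ≤ M n ω} ≤ ENNReal.ofReal ((∫ ω, M 0 ω ∂μ) / C) := by
  have key : ∀ N : ℕ, μ {ω | ∃ n, n ≤ N ∧ C ≤ M n ω} ≤ ENNReal.ofReal ((∫ ω, M 0 ω ∂μ) / C) := by
    intro N
    set τ : Ω → ℕ∞ := fun ω ↦ (hittingBtwn M {y : ℝ | C ≤ y} 0 N ω : ℕ) with hτdef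
    have hτ : IsStoppingTime ℱ τ :=
      hM.stronglyAdapted.adapted.isStoppingTime_hittingBtwn measurableSet_Ici
    have hle : ∀ ω, τ ω ≤ (N : ℕ∞) := fun ω => by
      simp only [hτdef]
      have h0 : hittingBtwn M {y : ℝ | C ≤ y} 0 N ω ≤ N := hittingBtwn_le ω
      exact_mod_cast h0
    have h1 := hM.neg.expected_stoppedValue_mono (isStoppingTime_const ℱ 0) hτ
      (fun ω => _root_.zero_le (a := τ ω)) hle
    have h2 : ∫ ω, stoppedValue M τ ω ∂μ ≤ ∫ ω, M 0 ω ∂μ := by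
      have e1 : stoppedValue (-M) τ = fun ω => - stoppedValue M τ ω := rfl
      have e2 : stoppedValue (-M) (fun _ => ((0 : ℕ) : ℕ∞)) = fun ω => - M 0 ω := rfl
      have h1' := h1
      erw [e1, e2, integral_neg, integral_neg] at h1'
      linarith
    have hint : Integrable (stoppedValue M τ) μ := by
      have := hM.neg.integrable_stoppedValue hτ hle
      have := this.neg
      convert this using 1
      ext ω; simp [stoppedValue]
    have h3 := mul_meas_ge_le_integral_of_nonneg (Filter.Eventually.of_forall
      (fun ω => hpos _ ω : ∀ ω, 0 ≤ stoppedValue M τ ω)) hint C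
    have hsub : {ω | ∃ n, n ≤ N ∧ C ≤ M n ω} ⊆ {ω | C ≤ stoppedValue M τ ω} := by
      rintro ω ⟨n, hn, hc⟩
      exact stoppedValue_hittingBtwn_mem (u := M) (s := {y : ℝ | C ≤ y}) ⟨n, ⟨Nat.zero_le _, hn⟩, hc⟩
    refine (measure_mono hsub).trans ?_
    rw [← ENNReal.ofReal_toReal (measure_ne_top μ {ω | C ≤ stoppedValue M τ ω})]
    apply ENNReal.ofReal_le_ofReal
    rw [le_div_iff₀ hC, mul_comm]
    exact h3.trans h2
  have hU : {ω | ∃ n, C ≤ M n ω} = ⋃ N : ℕ, {ω | ∃ n, n ≤ N ∧ C ≤ M n ω} := by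
    ext ω
    simp only [Set.mem_ofPred_eq, Set.mem_iUnion]
    exact ⟨fun ⟨n, h⟩ => ⟨n, n, le_rfl, h⟩, fun ⟨_, n, _, h⟩ => ⟨n, h⟩⟩
  rw [hU, Monotone.measure_iUnion]
  · exact iSup_le key
  · intro a b hab ω ⟨n, hn, h⟩
    exact ⟨n, hn.trans hab, h⟩

lemma num_choice (a v L S δ : ℝ) (n : ℕ) (hn : 1 ≤ n) (ha : 0 < a) (hδ : 0 < δ) (hδ1 : δ < 1)
    (hv0 : 0 ≤ v) (hvn : v ≤ n * a ^ 2) (hL : L = Real.log (4 * n / δ))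
    (hS : 2 * Real.sqrt (v * L) + 4 * a * L < S) :
    ∃ k : ℕ, (4 * 2 ^ k / δ : ℝ) ≤
      Real.exp ((2 ^ k * a)⁻¹ * S - 3 / 4 * ((2 ^ k * a)⁻¹) ^ 2 * v) := by
  have hn' : (1 : ℝ) ≤ n := by exact_mod_cast hn
  have hL1 : 1 ≤ L := by
    rw [hL, Real.le_log_iff_exp_le (by positivity), le_div_iff₀ hδ]
    nlinarith [Real.exp_one_lt_d9, Real.exp_pos 1]
  -- reduction
  suffices h : ∃ k : ℕ, (2 : ℝ) ^ k ≤ n ∧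
      3 / 4 * (2 ^ k * a)⁻¹ * v + (2 ^ k * a) * L ≤ 2 * Real.sqrt (v * L) + 4 * a * L by
    obtain ⟨k, hk, h⟩ := h
    refine ⟨k, ?_⟩
    have hp : (0 : ℝ) < 2 ^ k * a := by positivity
    have h1 : (4 * 2 ^ k / δ : ℝ) ≤ Real.exp L := by
      rw [hL, Real.exp_log (by positivity)]
      gcongr
    refine h1.trans (Real.exp_le_exp.mpr ?_)
    have h2 : (2 ^ k * a)⁻¹ * (3 / 4 * (2 ^ k * a)⁻¹ * v + (2 ^ k * a) * L) ≤ (2 ^ k * a)⁻¹ * S :=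
      mul_le_mul_of_nonneg_left (h.trans hS.le) (by positivity)
    rw [mul_add, inv_mul_cancel_left₀ hp.ne'] at h2
    nlinarith [h2]
  by_cases hc : v ≤ a ^ 2 * L
  · refine ⟨0, by simpa using hn', ?_⟩
    have h3 : a⁻¹ * v ≤ a * L := by
      rw [inv_mul_le_iff₀ ha]; nlinarith
    have := Real.sqrt_nonneg (v * L)
    have : 0 < a * L := by positivity
    simp only [pow_zero, one_mul]
    nlinarith
  · push Not at hc
    have hL0 : 0 < L := by linarith
    set x := Real.sqrt (v / L) / a with hx
    have hx1 : 1 ≤ x := by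
      rw [hx, le_div_iff₀ ha, one_mul]
      apply Real.le_sqrt_of_sq_le
      rw [le_div_iff₀ hL0]; exact hc.le
    have hvx : v = (x * a) ^ 2 * L := by
      rw [hx, div_mul_cancel₀ _ ha.ne', Real.sq_sqrt (by positivity), div_mul_cancel₀ _ hL0.ne']
    obtain ⟨k, hk1, hk2⟩ := exists_nat_pow_near hx1 (one_lt_two)
    have hs : Real.sqrt (v * L) = x * a * L := by
      rw [hvx, show (x * a) ^ 2 * L * L = (x * a * L) ^ 2 by ring, Real.sqrt_sq (by positivity)]
    have hp : (0 : ℝ) < 2 ^ k := by positivity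
    refine ⟨k, ?_, ?_⟩
    · have : x ^ 2 ≤ n := by
        have h5 : x ^ 2 * a ^ 2 ≤ n * a ^ 2 := by
          refine le_trans ?_ hvn
          rw [hvx]
          nlinarith [sq_nonneg (x * a)]
        exact le_of_mul_le_mul_right h5 (by positivity)
      nlinarith
    · rw [hs]
      rw [pow_succ] at hk2
      have h6 : 3 / 4 * (2 ^ k * a)⁻¹ * v + (2 ^ k * a) * L
          = a * L * (3 / 4 * x ^ 2 / 2 ^ k + 2 ^ k) := by
        rw [hvx]; field_simp
      have h7 : 3 / 4 * x ^ 2 / 2 ^ k + 2 ^ k ≤ 2 * x := by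
        have : 3 / 4 * x ^ 2 / 2 ^ k ≤ 2 * x - 2 ^ k := by
          rw [div_le_iff₀ hp]
          nlinarith [mul_nonneg (sub_nonneg.mpr hk1) (sub_nonneg.mpr hk2.le)]
        linarith
      rw [h6]
      have h8 : 0 < a * L := by positivity
      nlinarith [mul_le_mul_of_nonneg_left h7 h8.le]

lemma condVar_bds {Ω : Type*} {m : MeasurableSpace Ω} (μ : Measure Ω) [IsProbabilityMeasure μ]
    (ℱ : Filtration ℕ m) (X : ℕ → Ω → ℝ) (a : ℝ)
    (hint : ∀ n, Integrable (X n) μ)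
    (hbdd : ∀ n, 1 ≤ n → ∀ᵐ ω ∂μ, |X n ω| ≤ a) (n : ℕ) (hn : 1 ≤ n) :
    Integrable ((X n) ^ 2) μ ∧
    ∀ᵐ ω ∂μ, 0 ≤ (μ[(X n) ^ 2 | ℱ (n - 1)]) ω ∧ (μ[(X n) ^ 2 | ℱ (n - 1)]) ω ≤ a ^ 2 := by
  have hsq : ∀ᵐ ω ∂μ, ((X n) ^ 2) ω ≤ a ^ 2 := by
    filter_upwards [hbdd n hn] with ω h
    simp only [Pi.pow_apply]
    rw [← sq_abs]
    exact pow_le_pow_left₀ (abs_nonneg _) h 2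
  have hi : Integrable ((X n) ^ 2) μ := by
    refine Integrable.of_bound ((hint n).aestronglyMeasurable.pow 2) (a ^ 2) ?_
    filter_upwards [hsq] with ω h
    rw [Real.norm_eq_abs, abs_of_nonneg (by simp only [Pi.pow_apply]; positivity)]
    exact h
  refine ⟨hi, ?_⟩
  have h1 : 0 ≤ᵐ[μ] μ[(X n) ^ 2 | ℱ (n - 1)] :=
    condExp_nonneg (Filter.Eventually.of_forall fun ω => by
      simp only [Pi.pow_apply, Pi.zero_apply]; positivity)
  have h2 := condExp_mono (m := ℱ (n - 1)) hi (integrable_const (a ^ 2)) hsq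
  rw [condExp_const (ℱ.le _)] at h2
  filter_upwards [h1, h2] with ω h1 h2
  exact ⟨h1, h2⟩

lemma expMart {Ω : Type*} {m : MeasurableSpace Ω} (μ : Measure Ω) [IsProbabilityMeasure μ]
    (ℱ : Filtration ℕ m) (X : ℕ → Ω → ℝ) (a : ℝ)
    (hint : ∀ n, Integrable (X n) μ)
    (hmeas : ∀ n, 1 ≤ n → StronglyMeasurable[ℱ n] (X n))
    (hmds : ∀ n, 1 ≤ n → μ[X n | ℱ (n - 1)] =ᵐ[μ] 0)
    (hbdd : ∀ n, 1 ≤ n → ∀ᵐ ω ∂μ, |X n ω| ≤ a)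
    (l : ℝ) (hl : |l| * a ≤ 1) :
    Supermartingale (fun n ω => Real.exp (l * (∑ i ∈ Finset.Icc 1 n, X i ω)
      - 3 / 4 * l ^ 2 * (∑ i ∈ Finset.Icc 1 n, (μ[(X i) ^ 2 | ℱ (i - 1)]) ω))) ℱ μ := by
  have hSm : ∀ n k, n ≤ k → StronglyMeasurable[ℱ k] (fun ω => ∑ i ∈ Finset.Icc 1 n, X i ω) := by
    intro n k hnk
    refine Finset.stronglyMeasurable_fun_sum _ fun i hi => ?_
    rw [Finset.mem_Icc] at hi
    exact (hmeas i hi.1).mono (ℱ.mono (hi.2.trans hnk))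
  have hVm : ∀ n k, n ≤ k + 1 → StronglyMeasurable[ℱ k]
      (fun ω => ∑ i ∈ Finset.Icc 1 n, (μ[(X i) ^ 2 | ℱ (i - 1)]) ω) := by
    intro n k hnk
    refine Finset.stronglyMeasurable_fun_sum _ fun i hi => ?_
    rw [Finset.mem_Icc] at hi
    exact stronglyMeasurable_condExp.mono (ℱ.mono (by omega))
  have hadp : ∀ n k j, n ≤ k → j ≤ k + 1 → StronglyMeasurable[ℱ k] (fun ω =>
      Real.exp (l * (∑ i ∈ Finset.Icc 1 n, X i ω)
      - 3 / 4 * l ^ 2 * (∑ i ∈ Finset.Icc 1 j, (μ[(X i) ^ 2 | ℱ (i - 1)]) ω))) := by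
    intro n k j h1 h2
    exact Real.continuous_exp.comp_stronglyMeasurable
      (((hSm n k h1).const_mul l).sub ((hVm j k h2).const_mul _))
  have hlX : ∀ i, 1 ≤ i → ∀ᵐ ω ∂μ, |l * X i ω| ≤ 1 := by
    intro i hi
    filter_upwards [hbdd i hi] with ω h
    rw [abs_mul]
    exact (mul_le_mul_of_nonneg_left h (abs_nonneg l)).trans hl
  have hall : ∀ᵐ ω ∂μ, ∀ i, 1 ≤ i → |l * X i ω| ≤ 1 ∧ 0 ≤ (μ[(X i) ^ 2 | ℱ (i - 1)]) ω := by
    rw [ae_all_iff]; intro i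
    by_cases hi : 1 ≤ i
    · filter_upwards [hlX i hi, (condVar_bds μ ℱ X a hint hbdd i hi).2] with ω h1 h2 _
      exact ⟨h1, h2.1⟩
    · exact Filter.Eventually.of_forall fun ω h => absurd h hi
  have hInt : ∀ n j, Integrable (fun ω =>
      Real.exp (l * (∑ i ∈ Finset.Icc 1 n, X i ω)
      - 3 / 4 * l ^ 2 * (∑ i ∈ Finset.Icc 1 j, (μ[(X i) ^ 2 | ℱ (i - 1)]) ω))) μ := by
    intro n j
    refine Integrable.of_bound (((hadp n (max n j) j (le_max_left _ _)
      ((le_max_right _ _).trans (Nat.le_succ _))).mono (ℱ.le _)).aestronglyMeasurable)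
      (Real.exp n) ?_
    filter_upwards [hall] with ω h
    rw [Real.norm_eq_abs, Real.abs_exp]
    apply Real.exp_le_exp.mpr
    have hV : 0 ≤ ∑ i ∈ Finset.Icc 1 j, (μ[(X i) ^ 2 | ℱ (i - 1)]) ω :=
      Finset.sum_nonneg fun i hi => (h i (Finset.mem_Icc.mp hi).1).2
    have hS : l * (∑ i ∈ Finset.Icc 1 n, X i ω) ≤ n := by
      rw [Finset.mul_sum]
      calc _ ≤ ∑ i ∈ Finset.Icc 1 n, (1 : ℝ) := Finset.sum_le_sum fun i hi =>
            (le_abs_self _).trans (h i (Finset.mem_Icc.mp hi).1).1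
        _ = n := by simp
    have : 0 ≤ 3 / 4 * l ^ 2 * ∑ i ∈ Finset.Icc 1 j, (μ[(X i) ^ 2 | ℱ (i - 1)]) ω := by positivity
    linarith
  refine supermartingale_nat (fun n => hadp n n n le_rfl (Nat.le_succ _)) (fun n => hInt n n) ?_
  intro n
  set A : Ω → ℝ := fun ω => Real.exp (l * (∑ i ∈ Finset.Icc 1 n, X i ω)
      - 3 / 4 * l ^ 2 * (∑ i ∈ Finset.Icc 1 (n + 1), (μ[(X i) ^ 2 | ℱ (i - 1)]) ω)) with hA
  set B : Ω → ℝ := fun ω => Real.exp (l * X (n + 1) ω) with hB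
  have hAB : (fun ω => Real.exp (l * (∑ i ∈ Finset.Icc 1 (n + 1), X i ω)
      - 3 / 4 * l ^ 2 * (∑ i ∈ Finset.Icc 1 (n + 1), (μ[(X i) ^ 2 | ℱ (i - 1)]) ω))) = A * B := by
    ext ω
    simp only [hA, hB, Pi.mul_apply, ← Real.exp_add]
    rw [Finset.sum_Icc_succ_top (by omega : 1 ≤ n + 1) (fun i => X i ω)]
    congr 1; ring
  have hBint : Integrable B μ := by
    refine Integrable.of_bound (Real.continuous_exp.comp_aestronglyMeasurable
      ((hint (n + 1)).aestronglyMeasurable.const_mul l)) (Real.exp 1) ?_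
    filter_upwards [hlX (n + 1) (by omega)] with ω h
    rw [Real.norm_eq_abs, Real.abs_exp]
    exact Real.exp_le_exp.mpr ((le_abs_self _).trans h)
  have hpull : μ[A * B | ℱ n] =ᵐ[μ] A * μ[B | ℱ n] :=
    condExp_mul_of_stronglyMeasurable_left (hadp n n (n + 1) le_rfl le_rfl)
      (hAB ▸ hInt (n + 1) (n + 1)) hBint
  have hsqi := (condVar_bds μ ℱ X a hint hbdd (n + 1) (by omega)).1
  have hi1 : Integrable (fun _ : Ω => (1 : ℝ)) μ := integrable_const 1
  have hi2 : Integrable (l • X (n + 1)) μ := (hint (n + 1)).smul l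
  have hi3 : Integrable ((3 / 4 * l ^ 2) • (X (n + 1)) ^ 2) μ := hsqi.smul _
  have hmono : μ[B | ℱ n] ≤ᵐ[μ]
      μ[((fun _ : Ω => (1 : ℝ)) + l • X (n + 1)) + (3 / 4 * l ^ 2) • (X (n + 1)) ^ 2 | ℱ n] := by
    refine condExp_mono hBint ((hi1.add hi2).add hi3) ?_
    filter_upwards [hlX (n + 1) (by omega)] with ω h
    have := exp_le_quad h
    simp only [hB, Pi.add_apply, Pi.smul_apply, Pi.pow_apply, smul_eq_mul]
    nlinarith [this]
  have hmd := hmds (n + 1) (by omega)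
  rw [Nat.add_sub_cancel] at hmd
  have c1 := condExp_add (hi1.add hi2) hi3 (ℱ n)
  have c2 := condExp_add hi1 hi2 (ℱ n)
  have c3 := condExp_smul (μ := μ) l (X (n + 1)) (ℱ n)
  have c4 := condExp_smul (μ := μ) (3 / 4 * l ^ 2) ((X (n + 1)) ^ 2) (ℱ n)
  rw [condExp_const (ℱ.le n)] at c2
  rw [hAB]
  filter_upwards [hpull, hmono, hmd, c1, c2, c3, c4] with ω hp hm hd c1 c2 c3 c4
  rw [hp, Pi.mul_apply]
  rw [c1, Pi.add_apply, c2, Pi.add_apply, c3, c4, Pi.smul_apply, Pi.smul_apply, hd] at hm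
  simp only [smul_eq_mul, Pi.zero_apply, mul_zero, add_zero] at hm
  set q := (μ[(X (n + 1)) ^ 2 | ℱ n]) ω with hq
  have hm2 : (μ[B | ℱ n]) ω ≤ Real.exp (3 / 4 * l ^ 2 * q) :=
    hm.trans (by rw [add_comm]; exact Real.add_one_le_exp _)
  calc A ω * (μ[B | ℱ n]) ω ≤ A ω * Real.exp (3 / 4 * l ^ 2 * q) :=
        mul_le_mul_of_nonneg_left hm2 (Real.exp_pos _).le
    _ = _ := by
        simp only [hA, ← Real.exp_add]
        rw [Finset.sum_Icc_succ_top (by omega : 1 ≤ n + 1)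
          (fun i => (μ[(X i) ^ 2 | ℱ (i - 1)]) ω), Nat.add_sub_cancel, ← hq]
        congr 1; ring

/-- Freedman's inequality for bounded martingale difference sequences. -/
theorem freedman_inequality
    {Ω : Type*} {m : MeasurableSpace Ω} (μ : Measure Ω) [IsProbabilityMeasure μ]
    (ℱ : MeasureTheory.Filtration ℕ m) (X : ℕ → Ω → ℝ) (a : ℝ) (ha : 0 < a)
    (hint : ∀ n, Integrable (X n) μ)
    (hmeas : ∀ n, 1 ≤ n → StronglyMeasurable[ℱ n] (X n))
    (hmds : ∀ n, 1 ≤ n → μ[X n | ℱ (n - 1)] =ᵐ[μ] 0)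
    (hbdd : ∀ n, 1 ≤ n → ∀ᵐ ω ∂μ, |X n ω| ≤ a)
    (δ : ℝ) (hδ : δ ∈ Set.Ioo (0 : ℝ) 1) :
    ENNReal.ofReal (1 - δ) ≤
      μ {ω | ∀ n, 1 ≤ n →
        |∑ i ∈ Finset.Icc 1 n, X i ω| ≤
          2 * Real.sqrt ((∑ i ∈ Finset.Icc 1 n, (μ[(X i) ^ 2 | ℱ (i - 1)]) ω) *
              Real.log (4 * n / δ)) +
            4 * a * Real.log (4 * n / δ)} := by
  obtain ⟨hδ0, hδ1⟩ := hδ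
  set G := {ω | ∀ n, 1 ≤ n →
        |∑ i ∈ Finset.Icc 1 n, X i ω| ≤
          2 * Real.sqrt ((∑ i ∈ Finset.Icc 1 n, (μ[(X i) ^ 2 | ℱ (i - 1)]) ω) *
              Real.log (4 * n / δ)) +
            4 * a * Real.log (4 * n / δ)} with hG
  set E : ℝ → ℕ → Set Ω := fun s k => {ω | ∃ n, (4 * 2 ^ k / δ : ℝ) ≤
    Real.exp ((s * (2 ^ k * a)⁻¹) * (∑ i ∈ Finset.Icc 1 n, X i ω)
      - 3 / 4 * (s * (2 ^ k * a)⁻¹) ^ 2 *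
        (∑ i ∈ Finset.Icc 1 n, (μ[(X i) ^ 2 | ℱ (i - 1)]) ω))} with hE
  have hEb : ∀ s : ℝ, |s| = 1 → ∀ k, μ (E s k) ≤ ENNReal.ofReal (δ / 4 * (1 / 2) ^ k) := by
    intro s hs k
    have hl : |s * (2 ^ k * a)⁻¹| * a ≤ 1 := by
      rw [abs_mul, hs, one_mul, abs_of_pos (by positivity), mul_inv, mul_assoc,
        inv_mul_cancel₀ ha.ne', mul_one]
      exact inv_le_one_of_one_le₀ (one_le_pow₀ one_le_two)
    have h := ville μ ℱ _ (expMart μ ℱ X a hint hmeas hmds hbdd _ hl)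
      (fun n ω => (Real.exp_pos _).le) (4 * 2 ^ k / δ) (by positivity)
    refine h.trans (le_of_eq ?_)
    congr 1
    simp
    field_simp
  have hall : ∀ᵐ ω ∂μ, ∀ i, 1 ≤ i → 0 ≤ (μ[(X i) ^ 2 | ℱ (i - 1)]) ω ∧
      (μ[(X i) ^ 2 | ℱ (i - 1)]) ω ≤ a ^ 2 := by
    rw [ae_all_iff]; intro i
    by_cases hi : 1 ≤ i
    · filter_upwards [(condVar_bds μ ℱ X a hint hbdd i hi).2] with ω h2 _
      exact h2
    · exact Filter.Eventually.of_forall fun ω h => absurd h hi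
  have hsub : (Gᶜ : Set Ω) ≤ᵐ[μ] (⋃ k, (E 1 k ∪ E (-1) k) : Set Ω) := by
    filter_upwards [hall] with ω hω hb
    have hb : ω ∉ G := hb
    rw [hG, Set.mem_ofPred_eq] at hb
    push Not at hb
    obtain ⟨n, hn, hb⟩ := hb
    have hV0 : 0 ≤ ∑ i ∈ Finset.Icc 1 n, (μ[(X i) ^ 2 | ℱ (i - 1)]) ω :=
      Finset.sum_nonneg fun i hi => (hω i (Finset.mem_Icc.mp hi).1).1
    have hVn : ∑ i ∈ Finset.Icc 1 n, (μ[(X i) ^ 2 | ℱ (i - 1)]) ω ≤ n * a ^ 2 := by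
      calc _ ≤ ∑ i ∈ Finset.Icc 1 n, a ^ 2 :=
            Finset.sum_le_sum fun i hi => (hω i (Finset.mem_Icc.mp hi).1).2
        _ = n * a ^ 2 := by simp
    obtain ⟨k, hk⟩ := num_choice a _ _ _ δ n hn ha hδ0 hδ1 hV0 hVn rfl hb
    refine Set.mem_iUnion.mpr ⟨k, ?_⟩
    rcases abs_choice (∑ i ∈ Finset.Icc 1 n, X i ω) with h | h
    · left
      refine ⟨n, ?_⟩
      rw [h] at hk
      simpa only [one_mul] using hk
    · right
      refine ⟨n, ?_⟩
      rw [h] at hk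
      refine hk.trans (le_of_eq ?_)
      congr 1; ring
  have hGc : μ Gᶜ ≤ ENNReal.ofReal δ := by
    have hsum : HasSum (fun k : ℕ => δ / 2 * (1 / 2 : ℝ) ^ k) δ := by
      have := hasSum_geometric_two.mul_left (δ / 2)
      rwa [div_mul_cancel₀ _ two_ne_zero] at this
    calc μ Gᶜ ≤ μ (⋃ k, (E 1 k ∪ E (-1) k)) := measure_mono_ae hsub
      _ ≤ ∑' k, μ (E 1 k ∪ E (-1) k) := measure_iUnion_le _
      _ ≤ ∑' k : ℕ, ENNReal.ofReal (δ / 2 * (1 / 2 : ℝ) ^ k) := by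
          refine ENNReal.tsum_le_tsum fun k => ?_
          refine (measure_union_le _ _).trans ?_
          refine (add_le_add (hEb 1 (by simp) k) (hEb (-1) (by simp) k)).trans (le_of_eq ?_)
          rw [← ENNReal.ofReal_add (by positivity) (by positivity)]
          congr 1; ring
      _ = ENNReal.ofReal δ := by
          rw [← ENNReal.ofReal_tsum_of_nonneg (fun k => by positivity) hsum.summable, hsum.tsum_eq]
  have h1 : (1 : ENNReal) ≤ μ G + μ Gᶜ := by
    rw [← measure_univ (μ := μ), ← Set.union_compl_self G]
    exact measure_union_le _ _
  rw [ENNReal.ofReal_sub _ hδ0.le, ENNReal.ofReal_one]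
  refine tsub_le_iff_right.mpr (h1.trans ?_)
  gcongr
end

section
/- Let S be a finite set, let p : S → [0,1] be a probability vector whose support {s ∈ S : p(s) > 0} has cardinality Γ ≥ 1, and let w : S → ℝ. Then ∑_{s∈S} sqrt( p(s)·(1 − p(s))·w(s)² ) ≤ sqrt( (Γ − 1) · ∑_{s∈S} p(s)·w(s)² ). -/
open Finset

/-- Lemma 3 (bounded support): for a probability vector `p` with support of size `Γ ≥ 1`,
`∑_s sqrt(p(s)(1 - p(s)) w(s)²) ≤ sqrt((Γ - 1) ∑_s p(s) w(s)²)`. -/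
theorem sum_sqrt_le_sqrt_support
    {S : Type*} [Fintype S] (p w : S → ℝ) (Γ : ℕ)
    (hp0 : ∀ s, 0 ≤ p s) (hp1 : ∑ s, p s = 1)
    (hΓ : (Finset.univ.filter fun s => 0 < p s).card = Γ) (hΓ1 : 1 ≤ Γ) :
    ∑ s, Real.sqrt (p s * (1 - p s) * w s ^ 2) ≤
      Real.sqrt ((Γ - 1 : ℝ) * ∑ s, p s * w s ^ 2) := by
  have hple : ∀ s, p s ≤ 1 := fun s => by
    rw [← hp1]
    exact Finset.single_le_sum (fun i _ => hp0 i) (Finset.mem_univ s)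
  have hz : ∀ s, ¬ 0 < p s → p s = 0 := fun s h => le_antisymm (not_lt.mp h) (hp0 s)
  have e1 : ∑ s ∈ Finset.univ.filter (fun s => 0 < p s), p s = 1 := by
    rw [← hp1]
    refine Finset.sum_subset (Finset.filter_subset _ _) fun s _ h => hz s ?_
    simpa using h
  have e2 : ∑ s ∈ Finset.univ.filter (fun s => 0 < p s), p s * w s ^ 2
      = ∑ s, p s * w s ^ 2 := by
    refine Finset.sum_subset (Finset.filter_subset _ _) fun s _ h => ?_
    rw [hz s (by simpa using h), zero_mul]
  have e3 : ∑ s ∈ Finset.univ.filter (fun s => 0 < p s), Real.sqrt (p s * (1 - p s) * w s ^ 2)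
      = ∑ s, Real.sqrt (p s * (1 - p s) * w s ^ 2) := by
    refine Finset.sum_subset (Finset.filter_subset _ _) fun s _ h => ?_
    rw [hz s (by simpa using h), zero_mul, zero_mul, Real.sqrt_zero]
  have e4 : ∑ s ∈ Finset.univ.filter (fun s => 0 < p s), (1 - p s) = (Γ - 1 : ℝ) := by
    rw [Finset.sum_sub_distrib, e1, Finset.sum_const, hΓ, nsmul_eq_mul, mul_one]
  have hG : (0 : ℝ) ≤ Γ - 1 := by
    rw [← e4]
    exact Finset.sum_nonneg fun s _ => sub_nonneg.mpr (hple s)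
  rw [← e3, Real.sqrt_mul hG, ← e4, ← e2]
  have key := Real.sum_sqrt_mul_sqrt_le (Finset.univ.filter (fun s => 0 < p s))
    (f := fun s => 1 - p s) (g := fun s => p s * w s ^ 2)
    (fun s => sub_nonneg.mpr (hple s)) (fun s => mul_nonneg (hp0 s) (sq_nonneg _))
  refine le_trans (le_of_eq (Finset.sum_congr rfl fun s _ => ?_)) key
  rw [← Real.sqrt_mul (sub_nonneg.mpr (hple s))]
  congr 1
  ring
end

section
/- Let (ν_k)_{k≥1} be a sequence of nonnegative real numbers and define N_1 = 0 and N_{k+1} = N_k + ν_k for all k ≥ 1. Assume that ν_k ≤ max(1, N_k) for every k ≥ 1. Then for every K ≥ 1, ∑_{k=1}^{K} ν_k / sqrt(max(1, N_k)) ≤ 3·sqrt(N_{K+1}). -/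
open Finset

lemma step_aux (n v : ℝ) (hn : 0 ≤ n) (hv : 0 ≤ v) (hd : v ≤ max 1 n) :
    v / Real.sqrt (max 1 n) ≤ 3 * (Real.sqrt (n + v) - Real.sqrt n) := by
  have h1 : (1 : ℝ) ≤ max 1 n := le_max_left _ _
  have hm : 0 < Real.sqrt (max 1 n) := Real.sqrt_pos.mpr (by linarith)
  have hb : Real.sqrt n ≤ Real.sqrt (max 1 n) := Real.sqrt_le_sqrt (le_max_right _ _)
  have hab : Real.sqrt n ≤ Real.sqrt (n + v) := Real.sqrt_le_sqrt (by linarith)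
  have ha : Real.sqrt (n + v) ≤ 2 * Real.sqrt (max 1 n) := by
    rw [Real.sqrt_le_left (by positivity), mul_pow, Real.sq_sqrt (by linarith)]
    linarith [le_max_right 1 n]
  have e1 := Real.sq_sqrt hn
  have e2 := Real.sq_sqrt (add_nonneg hn hv)
  rw [div_le_iff₀ hm]
  nlinarith [mul_nonneg (sub_nonneg.mpr hab)
    (by linarith : 0 ≤ 3 * Real.sqrt (max 1 n) - (Real.sqrt (n + v) + Real.sqrt n))]

/-- Under the episode-doubling condition `ν_k ≤ max(1, N_k)`, where `N_1 = 0` and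
`N_{k+1} = N_k + ν_k`, we have `∑_{k=1}^K ν_k / sqrt(max(1, N_k)) ≤ 3 sqrt(N_{K+1})`. -/
theorem sum_div_sqrt_le
    (ν N : ℕ → ℝ) (hν0 : ∀ k, 1 ≤ k → 0 ≤ ν k)
    (hN1 : N 1 = 0) (hNrec : ∀ k, 1 ≤ k → N (k + 1) = N k + ν k)
    (hdouble : ∀ k, 1 ≤ k → ν k ≤ max 1 (N k)) (K : ℕ) (hK : 1 ≤ K) :
    ∑ k ∈ Finset.Icc 1 K, ν k / Real.sqrt (max 1 (N k)) ≤ 3 * Real.sqrt (N (K + 1)) := by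
  have hN : ∀ k, 0 ≤ N (k + 1) := by
    intro k
    induction k with
    | zero => simp [hN1]
    | succ k ih =>
      rw [hNrec (k + 1) (by omega)]
      exact add_nonneg ih (hν0 _ (by omega))
  clear hK
  induction K with
  | zero => simp [hN1]
  | succ k ih =>
    rw [Finset.sum_Icc_succ_top (by omega)]
    have h := step_aux (N (k + 1)) (ν (k + 1)) (hN k) (hν0 _ (by omega)) (hdouble _ (by omega))
    rw [← hNrec (k + 1) (by omega)] at h
    linarith
end

section
/- Let (ν_k)_{k≥1} be a sequence of nonnegative real numbers and define N_1 = 0 and N_{k+1} = N_k + ν_k for all k ≥ 1. Assume that ν_k ≤ max(1, N_k) for every k ≥ 1. Then for every K ≥ 1, ∑_{k=1}^{K} ν_k / max(1, N_k) ≤ 2 + 2·ln(max(1, N_{K+1})). -/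
open Finset

/-- Under the episode-doubling condition `ν_k ≤ max(1, N_k)`, where `N_1 = 0` and
`N_{k+1} = N_k + ν_k`, we have `∑_{k=1}^K ν_k / max(1, N_k) ≤ 2 + 2 ln(max(1, N_{K+1}))`. -/
theorem sum_div_le_log
    (ν N : ℕ → ℝ) (hν0 : ∀ k, 1 ≤ k → 0 ≤ ν k)
    (hN1 : N 1 = 0) (hNrec : ∀ k, 1 ≤ k → N (k + 1) = N k + ν k)
    (hdouble : ∀ k, 1 ≤ k → ν k ≤ max 1 (N k)) (K : ℕ) (hK : 1 ≤ K) :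
    ∑ k ∈ Finset.Icc 1 K, ν k / max 1 (N k) ≤ 2 + 2 * Real.log (max 1 (N (K + 1))) := by
  have key : ∑ k ∈ Finset.Icc 1 K, ν k / max 1 (N k)
      ≤ min 2 (N (K + 1)) + 2 * Real.log (max 1 (N (K + 1))) := by
    have step : ∀ S : ℝ, ∀ k, 1 ≤ k → S ≤ min 2 (N k) + 2 * Real.log (max 1 (N k)) →
        S + ν k / max 1 (N k) ≤ min 2 (N (k + 1)) + 2 * Real.log (max 1 (N (k + 1))) := by
      intro S k hk hS
      have h0 := hν0 k hk
      have hd := hdouble k hk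
      rw [hNrec k hk]
      rcases le_total (N k) 1 with h | h
      · rw [max_eq_left h] at *
        rw [min_eq_right (by linarith), Real.log_one] at hS
        rw [min_eq_right (by linarith)]
        have := Real.log_nonneg (le_max_left 1 (N k + ν k))
        linarith
      · rw [max_eq_right h] at *
        rw [max_eq_right (by linarith)]
        have hp : 0 < N k := by linarith
        have hp' : 0 < N k + ν k := by linarith
        have h1 := Real.one_sub_inv_le_log_of_pos (div_pos hp' hp)
        rw [Real.log_div hp'.ne' hp.ne', inv_div] at h1
        have h2 : ν k / N k ≤ 2 * (1 - N k / (N k + ν k)) := by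
          have e : 2 * (1 - N k / (N k + ν k)) = 2 * ν k / (N k + ν k) := by
            field_simp
            ring
          rw [e, div_le_div_iff₀ hp hp']
          nlinarith
        have h3 : min 2 (N k) ≤ min 2 (N k + ν k) := min_le_min le_rfl (by linarith)
        linarith
    induction K, hK using Nat.le_induction with
    | base =>
      have := step 0 1 le_rfl (by simp [hN1])
      simpa using this
    | succ n hn ih =>
      rw [Finset.sum_Icc_succ_top (by omega)]
      exact step _ (n + 1) (by omega) ih
  have := min_le_left 2 (N (K + 1))
  linarith
end

section
/- Let S be a finite nonempty set, let p̂ and q be probability vectors on S, let w : S → ℝ, let s, s' ∈ S, let g, r, ε, r_max, α, D be real numbers with α > 0, 0 ≤ ε ≤ r_max, D > 0, and suppose ‖w‖_∞ ≤ r_max·D/(2α), |g − r + α·(w(s) − ∑_{x} q(x)·w(x))| ≤ ε, and |r − g| ≤ r_max. Then α²·( w(s')² − (∑_{x} p̂(x)·w(x))² ) ≤ ( 2·r_max + α·|∑_{x} (q(x) − p̂(x))·w(x)| )·r_max·D + α²·( w(s')² − w(s)² ). -/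
open Finset

/-- Key step in bounding the dominant term of the sum of variances:
`α²(w(s')² − (p̂^⊺w)²) ≤ (2 r_max + α|(q − p̂)^⊺w|) r_max D + α²(w(s')² − w(s)²)`. -/
theorem variance_dominant_term_bound
    {S : Type*} [Fintype S] [Nonempty S] (phat q : S → ℝ)
    (hphat0 : ∀ x, 0 ≤ phat x) (hphat1 : ∑ x, phat x = 1)
    (hq0 : ∀ x, 0 ≤ q x) (hq1 : ∑ x, q x = 1)
    (w : S → ℝ) (s s' : S) (g r ε rmax α D : ℝ)
    (hα : 0 < α) (hε0 : 0 ≤ ε) (hε : ε ≤ rmax) (hD : 0 < D)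
    (hwinf : ∀ x, |w x| ≤ rmax * D / (2 * α))
    (hopt : |g - r + α * (w s - ∑ x, q x * w x)| ≤ ε)
    (hrg : |r - g| ≤ rmax) :
    α ^ 2 * (w s' ^ 2 - (∑ x, phat x * w x) ^ 2) ≤
      (2 * rmax + α * |∑ x, (q x - phat x) * w x|) * (rmax * D) +
        α ^ 2 * (w s' ^ 2 - w s ^ 2) := by
  have hP : |∑ x, phat x * w x| ≤ rmax * D / (2 * α) := by
    calc |∑ x, phat x * w x| ≤ ∑ x, |phat x * w x| := Finset.abs_sum_le_sum_abs _ _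
      _ ≤ ∑ x, phat x * (rmax * D / (2 * α)) := by
          apply Finset.sum_le_sum
          intro x _
          rw [abs_mul, abs_of_nonneg (hphat0 x)]
          exact mul_le_mul_of_nonneg_left (hwinf x) (hphat0 x)
      _ = rmax * D / (2 * α) := by rw [← Finset.sum_mul, hphat1, one_mul]
  have hd : ∑ x, (q x - phat x) * w x = ∑ x, q x * w x - ∑ x, phat x * w x := by
    simp only [sub_mul, Finset.sum_sub_distrib]
  have hs := hwinf s
  rw [hd]
  generalize (∑ x, phat x * w x) = P at *
  generalize (∑ x, q x * w x) = Q at *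
  have hK : α * (rmax * D / (2 * α)) = rmax * D / 2 := by field_simp
  have h1 : |α * (w s + P)| ≤ rmax * D := by
    rw [abs_mul, abs_of_pos hα]
    have h := mul_le_mul_of_nonneg_left ((abs_add_le (w s) P).trans (add_le_add hs hP)) hα.le
    linarith
  have h2 : |α * (w s - P)| ≤ 2 * rmax + α * |Q - P| := by
    have e : α * (w s - P) = (g - r + α * (w s - Q)) + (r - g) + α * (Q - P) := by ring
    have e2 : |α * (Q - P)| = α * |Q - P| := by rw [abs_mul, abs_of_pos hα]
    rw [e, ← e2]
    have a := abs_add_le ((g - r + α * (w s - Q)) + (r - g)) (α * (Q - P))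
    have b := abs_add_le (g - r + α * (w s - Q)) (r - g)
    linarith
  have h3 : α * (w s - P) * (α * (w s + P)) ≤ (2 * rmax + α * |Q - P|) * (rmax * D) := by
    refine (le_abs_self _).trans ?_
    rw [abs_mul]
    exact mul_le_mul h2 h1 (abs_nonneg _) ((abs_nonneg _).trans h2)
  linarith
end
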